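/- In digraphs, 2-edge-connected blocks do not correspond to 2-edge-connected components: there exist a strongly connected digraph G = (V, E) and two distinct vertices v, w ∈ V such that v ↔₂ₑ w in G, but there is no subgraph H of G containing both v and w that is 2-edge-connected. -/

import Mathlib

variable {V : Type*}

/-- `p` is a path from `u` to `w` in the digraph with edge set `E`:
a nonempty list of vertices starting at `u`, ending at `w`, with consecutive edges in `E`. -/
def IsPathFrom (E : Set (V × V)) (u w : V) (p : List V) : Prop :=
  p.head? = some u ∧ p.getLast? = some w ∧ p.Chain' (fun a b => (a, b) ∈ E)

/-- There is a path from `u` to `w` in the digraph with edge set `E`. -/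
def Reaches (E : Set (V × V)) (u w : V) : Prop :=
  ∃ p, IsPathFrom E u w p

/-- Every vertex has a path to every other vertex. -/
def StronglyConnected (E : Set (V × V)) : Prop :=
  ∀ u w : V, Reaches E u w

/-- `v` and `w` are 2-edge-connected: `v = w` or, for every edge `e`,
there are paths from `v` to `w` and from `w` to `v` avoiding `e`. -/
def TwoEdgeConn (E : Set (V × V)) (v w : V) : Prop :=
  v = w ∨ ∀ e ∈ E, Reaches (E \ {e}) v w ∧ Reaches (E \ {e}) w v

/-- `w` is 2-edge-connected from `v`: for every edge `e` there is a path
from `v` to `w` avoiding `e`. -/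
def TwoEdgeConnFrom (E : Set (V × V)) (v w : V) : Prop :=
  ∀ e ∈ E, Reaches (E \ {e}) v w

/-- `u` dominates `w` in the flow graph with start vertex `s`:
every path from `s` to `w` contains `u`. -/
def Dominates (E : Set (V × V)) (s u w : V) : Prop :=
  ∀ p, IsPathFrom E s w p → u ∈ p

/-- `(u, w)` is a bridge of the flow graph with start vertex `s`:
every path from `s` to `w` contains the edge `(u, w)`. -/
def IsBridge (E : Set (V × V)) (s u w : V) : Prop :=
  (u, w) ∈ E ∧ ∀ p, IsPathFrom E s w p → (u, w) ∈ p.zip p.tail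

/-- `w` is marked in the flow graph with start vertex `s`: some bridge ends at `w`. -/
def Marked (E : Set (V × V)) (s w : V) : Prop :=
  ∃ u, IsBridge E s u w

/-- The reverse digraph: every edge direction is reversed. -/
def reverseE (E : Set (V × V)) : Set (V × V) :=
  {e | (e.2, e.1) ∈ E}

/-- `u` and `w` are mutually reachable. -/
def MutualReach (E : Set (V × V)) (u w : V) : Prop :=
  Reaches E u w ∧ Reaches E w u

/-- The number of strongly connected components: the number of equivalence
classes of the mutual-reachability relation. -/
noncomputable def numSCC (E : Set (V × V)) : ℕ :=
  Nat.card (Quot (MutualReach E))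

/-- `e` is a strong bridge: removing it increases the number of strongly
connected components. -/
def IsStrongBridge (E : Set (V × V)) (e : V × V) : Prop :=
  e ∈ E ∧ numSCC E < numSCC (E \ {e})

/-- `d` is the immediate dominator of `w` in the flow graph with start vertex `s`:
`d` is a proper dominator of `w` dominated by every proper dominator of `w`. -/
def ImmDomIs (E : Set (V × V)) (s w d : V) : Prop :=
  Dominates E s d w ∧ d ≠ w ∧ ∀ x, Dominates E s x w → x ≠ w → Dominates E s x d

/-- `r` is the deepest marked dominator `r_v` of `v`: either `r` is a marked
dominator of `v` dominated by every marked dominator of `v`, or no marked vertex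
dominates `v` and `r = s`. -/
def DeepestMarkedDomIs (E : Set (V × V)) (s v r : V) : Prop :=
  (Marked E s r ∧ Dominates E s r v ∧
    ∀ x, Marked E s x → Dominates E s x v → Dominates E s x r)
  ∨ (r = s ∧ ∀ x, Marked E s x → ¬ Dominates E s x v)

/-- `T(r)`: the vertices whose deepest marked dominator is `r`. -/
def Tset (E : Set (V × V)) (s r : V) : Set V :=
  {v | DeepestMarkedDomIs E s v r}

/-- The roots of the decomposition of the dominator tree: `s` and the marked vertices. -/
def IsRoot (E : Set (V × V)) (s r : V) : Prop :=
  r = s ∨ Marked E s r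

/-- `z` is a marked child (in the dominator tree) of a boundary vertex of `T(r)`. -/
def MarkedChildOfBoundary (E : Set (V × V)) (s r z : V) : Prop :=
  Marked E s z ∧ ∃ x ∈ Tset E s r, ImmDomIs E s z x

/-- The vertex set `V_r` of the auxiliary graph `G_r` (with `dr` playing the role
of `d(r)` when `r ≠ s`): the ordinary vertices `T(r)`, the marked children of
boundary vertices of `T(r)`, and (if `r ≠ s`) the vertex `d(r)`. -/
def auxVerts (E : Set (V × V)) (s r dr : V) : Set V :=
  Tset E s r ∪ {z | MarkedChildOfBoundary E s r z} ∪ {x | r ≠ s ∧ x = dr}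

/-- The edge set `E_r` of the auxiliary graph `G_r` (with `dr` playing the role of
`d(r)` when `r ≠ s`): edges of `G` between ordinary vertices; the edge `(v, w)` for
each boundary vertex `v ∈ T(r)` and marked child `w` of `v`; the edge `(d(r), r)` if
`r ≠ s`; and the shortcut edges of types (a), (b), (c). -/
def auxEdges (E : Set (V × V)) (s r dr : V) : Set (V × V) :=
  {e | e ∈ E ∧ e.1 ∈ Tset E s r ∧ e.2 ∈ Tset E s r} ∪
  {e | e.1 ∈ Tset E s r ∧ Marked E s e.2 ∧ ImmDomIs E s e.2 e.1} ∪
  {e | r ≠ s ∧ e = (dr, r)} ∪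
  {e | ∃ u v, (u, v) ∈ E ∧ u ∈ Tset E s r ∧ ¬ Dominates E s r v ∧ e = (u, dr)} ∪
  {e | ∃ u v z, (u, v) ∈ E ∧ v ∈ Tset E s r ∧ Dominates E s r u ∧ u ∉ Tset E s r ∧
      MarkedChildOfBoundary E s r z ∧ Dominates E s z u ∧ e = (z, v)} ∪
  {e | ∃ u v z, (u, v) ∈ E ∧ Dominates E s r u ∧ u ∉ Tset E s r ∧ ¬ Dominates E s r v ∧
      MarkedChildOfBoundary E s r z ∧ Dominates E s z u ∧ e = (z, dr)}

/-- `H = (VH, EH)` is a 2-edge-connected digraph: it has at least two vertices, it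
is strongly connected, and it remains strongly connected after removing any single
edge. -/
def TwoECDigraph (VH : Set V) (EH : Set (V × V)) : Prop :=
  1 < VH.ncard ∧ (∀ u ∈ VH, ∀ x ∈ VH, Reaches EH u x) ∧
  ∀ e ∈ EH, ∀ u ∈ VH, ∀ x ∈ VH, Reaches (EH \ {e}) u x

/-!
The example is a directed 4-cycle `0 → 1 → 2 → 3 → 0` with the chords `0 → 2` and `2 → 0`. Each
chord together with the half of the cycle parallel to it gives two edge-disjoint paths, so `0` and
`2` are 2-edge-connected. In a 2-edge-connected digraph every vertex has at least two incoming and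
two outgoing edges. Hence a 2-edge-connected subgraph avoids `1`, whose only incoming edge is
`0 → 1`; but without `1` the only edge leaving `0` is `0 → 2`, so it avoids `0` as well.
-/

section Reaches

variable {E : Set (V × V)} {u v w : V}

theorem reaches_iff_reflTransGen :
    Reaches E u w ↔ Relation.ReflTransGen (fun a b => (a, b) ∈ E) u w := by
  constructor
  · rintro ⟨p, hhead, hlast, hchain⟩
    obtain ⟨l, rfl⟩ := List.head?_eq_some_iff.mp hhead
    exact List.relationReflTransGen_of_exists_isChain_cons l hchain
      (Option.some_injective _ (List.getLast?_eq_some_getLast _ ▸ hlast))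
  · intro h
    obtain ⟨l, hchain, rfl⟩ := List.exists_isChain_cons_of_relationReflTransGen h
    exact ⟨u :: l, rfl, List.getLast?_eq_some_getLast _, hchain⟩

theorem Reaches.refl (u : V) : Reaches E u u :=
  reaches_iff_reflTransGen.mpr .refl

theorem Reaches.tail (huv : Reaches E u v) (hvw : (v, w) ∈ E) : Reaches E u w :=
  reaches_iff_reflTransGen.mpr ((reaches_iff_reflTransGen.mp huv).tail hvw)

theorem Reaches.single (huw : (u, w) ∈ E) : Reaches E u w :=
  (Reaches.refl u).tail huw

theorem Reaches.exists_head_mem (h : Reaches E u w) (hne : u ≠ w) : ∃ v, (u, v) ∈ E := by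
  obtain rfl | ⟨v, huv, -⟩ := (reaches_iff_reflTransGen.mp h).cases_head
  · exact absurd rfl hne
  · exact ⟨v, huv⟩

theorem Reaches.exists_tail_mem (h : Reaches E u w) (hne : u ≠ w) : ∃ v, (v, w) ∈ E := by
  obtain rfl | ⟨v, -, hvw⟩ := (reaches_iff_reflTransGen.mp h).cases_tail
  · exact absurd rfl hne
  · exact ⟨v, hvw⟩

end Reaches

open Fin.CommRing in
theorem stronglyConnected_of_forall_mem_add_one {n : ℕ} [NeZero n] {E : Set (Fin n × Fin n)}
    (hE : ∀ i, (i, i + 1) ∈ E) : StronglyConnected E := by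
  intro u w
  have reaches_add_natCast (k : ℕ) : Reaches E u (u + (k : Fin n)) := by
    induction k with
    | zero => simpa using Reaches.refl u
    | succ k ih => simpa [add_assoc] using ih.tail (hE _)
  simpa using reaches_add_natCast (w - u).val

theorem twoEdgeConnFrom_of_reaches_sdiff_singleton {E : Set (V × V)} {v w : V}
    (hvw : (v, w) ∈ E) (hdetour : Reaches (E \ {(v, w)}) v w) : TwoEdgeConnFrom E v w := by
  intro e _
  obtain rfl | hne := eq_or_ne (v, w) e
  · exact hdetour
  · exact .single ⟨hvw, hne⟩

namespace TwoECDigraph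

variable {VH : Set V} {EH : Set (V × V)}

theorem reaches_sdiff_singleton (hH : TwoECDigraph VH EH) {u w : V} (hu : u ∈ VH) (hw : w ∈ VH)
    (e : V × V) : Reaches (EH \ {e}) u w := by
  by_cases he : e ∈ EH
  · exact hH.2.2 e he u hu w hw
  · rw [Set.sdiff_singleton_eq_self he]
    exact hH.2.1 u hu w hw

theorem exists_ne_mem_out (hH : TwoECDigraph VH EH) {u : V} (hu : u ∈ VH) (v : V) :
    ∃ w ≠ v, (u, w) ∈ EH := by
  obtain ⟨x, hx, hxu⟩ := Set.exists_ne_of_one_lt_ncard hH.1 u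
  obtain ⟨w, hw, hne⟩ := (hH.reaches_sdiff_singleton hu hx (u, v)).exists_head_mem hxu.symm
  exact ⟨w, fun hwv => hne (congrArg (u, ·) hwv), hw⟩

theorem exists_ne_mem_in (hH : TwoECDigraph VH EH) {u : V} (hu : u ∈ VH) (v : V) :
    ∃ w ≠ v, (w, u) ∈ EH := by
  obtain ⟨x, hx, hxu⟩ := Set.exists_ne_of_one_lt_ncard hH.1 u
  obtain ⟨w, hw, hne⟩ := (hH.reaches_sdiff_singleton hx hu (v, u)).exists_tail_mem hxu
  exact ⟨w, fun hwv => hne (congrArg (·, u) hwv), hw⟩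

end TwoECDigraph

/-- The edge set of the counterexample: the directed cycle `0 → 1 → 2 → 3 → 0` together with the
diagonal between `0` and `2` in both directions. -/
def chordedSquare : Set (Fin 4 × Fin 4) :=
  {(0, 1), (1, 2), (2, 3), (3, 0), (0, 2), (2, 0)}

namespace chordedSquare

theorem stronglyConnected : StronglyConnected chordedSquare :=
  stronglyConnected_of_forall_mem_add_one fun i => by fin_cases i <;> simp [chordedSquare]

theorem twoEdgeConn_zero_two : TwoEdgeConn chordedSquare 0 2 := by
  have detour_zero_two : Reaches (chordedSquare \ {(0, 2)}) 0 2 :=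
    (Reaches.single (w := 1) (by simp [chordedSquare])).tail (by simp [chordedSquare])
  have detour_two_zero : Reaches (chordedSquare \ {(2, 0)}) 2 0 :=
    (Reaches.single (w := 3) (by simp [chordedSquare])).tail (by simp [chordedSquare])
  have zero_two : TwoEdgeConnFrom chordedSquare 0 2 :=
    twoEdgeConnFrom_of_reaches_sdiff_singleton (by simp [chordedSquare]) detour_zero_two
  have two_zero : TwoEdgeConnFrom chordedSquare 2 0 :=
    twoEdgeConnFrom_of_reaches_sdiff_singleton (by simp [chordedSquare]) detour_two_zero
  exact .inr fun e he => ⟨zero_two e he, two_zero e he⟩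

theorem eq_zero_of_mem_one {i : Fin 4} (h : (i, 1) ∈ chordedSquare) : i = 0 := by
  simpa [chordedSquare] using h

theorem eq_one_or_eq_two_of_zero_mem {i : Fin 4} (h : (0, i) ∈ chordedSquare) :
    i = 1 ∨ i = 2 := by
  simpa [chordedSquare] using h

variable {VH : Set (Fin 4)} {EH : Set (Fin 4 × Fin 4)}

theorem one_notMem_of_twoECDigraph (hsub : EH ⊆ chordedSquare) (hH : TwoECDigraph VH EH) :
    1 ∉ VH := by
  intro h1
  obtain ⟨i, hi, hi1⟩ := hH.exists_ne_mem_in h1 0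
  exact hi (eq_zero_of_mem_one (hsub hi1))

theorem zero_notMem_of_twoECDigraph (hsub : EH ⊆ chordedSquare)
    (hVH : ∀ e ∈ EH, e.1 ∈ VH ∧ e.2 ∈ VH) (hH : TwoECDigraph VH EH) : 0 ∉ VH := by
  intro h0
  obtain ⟨i, hi, h0i⟩ := hH.exists_ne_mem_out h0 2
  obtain rfl := (eq_one_or_eq_two_of_zero_mem (hsub h0i)).resolve_right hi
  exact one_notMem_of_twoECDigraph hsub hH (hVH _ h0i).2

end chordedSquare

/-- 2-edge-connected blocks do not correspond to 2-edge-connected components: there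
are a strongly connected digraph `G` and distinct vertices `v, w` that are
2-edge-connected in `G`, yet no 2-edge-connected subgraph of `G` contains both. -/
theorem blocks_differ_from_components :
    ∃ (V : Type) (_ : Fintype V) (E : Set (V × V)) (v w : V),
      StronglyConnected E ∧ v ≠ w ∧ TwoEdgeConn E v w ∧
      ¬ ∃ (VH : Set V) (EH : Set (V × V)), EH ⊆ E ∧
          (∀ e ∈ EH, e.1 ∈ VH ∧ e.2 ∈ VH) ∧ v ∈ VH ∧ w ∈ VH ∧
          TwoECDigraph VH EH := by
  refine ⟨Fin 4, inferInstance, chordedSquare, 0, 2, chordedSquare.stronglyConnected, by decide,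
    chordedSquare.twoEdgeConn_zero_two, ?_⟩
  rintro ⟨VH, EH, hsub, hVH, h0, -, hH⟩
  exact chordedSquare.zero_notMem_of_twoECDigraph hsub hVH hH h0
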